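/- Let η be a numerical submeasure on a ring Σ. Then γ defined by γ_E(x) = max(min(1 + x − η(E), 1), 0) for x > 0 is a τ_{L,W}-submeasure for any L ≥ K₁ (pointwise above addition), where W is the Łukasiewicz t-norm W(u,v) = max(u+v−1, 0). In particular, γ_{E∪F}(x+y) ≥ max(γ_E(x) + γ_F(y) − 1, 0) for all x,y > 0 and E,F ∈ Σ. -/

import Mathlib

/-!
For `0 < u ≤ 1`, the inequality `u ≤ γ_E(x)` says that `0 < x` and `η E ≤ 1 + x - u`. In this form
the distribution functions become upper bounds on `η`: monotonicity of `η` makes `γ` antitone, and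
adding the bounds `η E ≤ 1 + x - u` and `η F ≤ 1 + y - v` yields
`η (E ∪ F) ≤ 1 + (x + y) - (u + v - 1)`, which is the Łukasiewicz inequality.
-/

open Set
open scoped ENNReal Classical

noncomputable section

def eps0 (x : ℝ) : ℝ := if 0 < x then 1 else 0

def IsDistrFn (F : ℝ → ℝ) : Prop :=
  Monotone F ∧ (∀ x, x ≤ 0 → F x = 0) ∧ (∀ x, F x ≤ 1)

def IsSetRing {Ω : Type*} (R : Set (Set Ω)) : Prop :=
  ∅ ∈ R ∧ (∀ E F : Set Ω, E ∈ R → F ∈ R → E ∪ F ∈ R) ∧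
    (∀ E F : Set Ω, E ∈ R → F ∈ R → E \ F ∈ R)

def IsNumSubmeasure {Ω : Type*} (R : Set (Set Ω)) (η : Set Ω → ℝ≥0∞) : Prop :=
  η ∅ = 0 ∧ (∀ E F : Set Ω, E ∈ R → F ∈ R → E ⊆ F → η E ≤ η F) ∧
    (∀ E F : Set Ω, E ∈ R → F ∈ R → η (E ∪ F) ≤ η E + η F)

/-- `γ` is a `τ_{L,A}`-submeasure on the ring `R`. -/
def IsTauSub {Ω : Type*} (R : Set (Set Ω)) (L : ℝ → ℝ → ℝ) (A : ℝ → ℝ → ℝ)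
    (γ : Set Ω → ℝ → ℝ) : Prop :=
  (∀ E, E ∈ R → IsDistrFn (γ E)) ∧
  (∀ x, γ ∅ x = eps0 x) ∧
  (∀ E F : Set Ω, E ∈ R → F ∈ R → E ⊆ F → ∀ x, γ F x ≤ γ E x) ∧
  (∀ E F : Set Ω, E ∈ R → F ∈ R → ∀ x y : ℝ, 0 < x → 0 < y →
    A (γ E x) (γ F y) ≤ γ (E ∪ F) (L x y))

def IsTnorm (T : ℝ → ℝ → ℝ) : Prop :=
  (∀ u v, T u v = T v u) ∧ (∀ u v w, T (T u v) w = T u (T v w)) ∧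
  (∀ u u' v, u ∈ Icc (0:ℝ) 1 → u' ∈ Icc (0:ℝ) 1 → v ∈ Icc (0:ℝ) 1 → u ≤ u' →
    T u v ≤ T u' v) ∧
  (∀ u ∈ Icc (0:ℝ) 1, T u 1 = u) ∧
  (∀ u v, u ∈ Icc (0:ℝ) 1 → v ∈ Icc (0:ℝ) 1 → T u v ∈ Icc (0:ℝ) 1)

/-- The Łukasiewicz t-norm `W`, given by its formula on all of `ℝ` rather than only on `[0, 1]`. -/
def lukasiewicz (u v : ℝ) : ℝ := max (u + v - 1) 0

/-- The distribution function `x ↦ max (min (1 + x - a) 1) 0` on `x > 0`, extended by `0` to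
`x ≤ 0`; it is `γ_E` when `a = η E`. The case `a = ∞` is separated because
`(∞ : ℝ≥0∞).toReal = 0`. -/
def truncDistr (a : ℝ≥0∞) (x : ℝ) : ℝ :=
  if x ≤ 0 then 0 else if a = ∞ then 0 else max (min (1 + x - a.toReal) 1) 0

namespace truncDistr

lemma nonneg (a : ℝ≥0∞) (x : ℝ) : 0 ≤ truncDistr a x := by
  unfold truncDistr
  split_ifs
  exacts [le_rfl, le_rfl, le_max_right _ _]

lemma le_one (a : ℝ≥0∞) (x : ℝ) : truncDistr a x ≤ 1 := by
  unfold truncDistr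
  split_ifs
  exacts [zero_le_one, zero_le_one, max_le (min_le_right _ _) zero_le_one]

lemma of_nonpos (a : ℝ≥0∞) {x : ℝ} (hx : x ≤ 0) : truncDistr a x = 0 := if_pos hx

lemma le_iff {a : ℝ≥0∞} {x u : ℝ} (hu : 0 < u) (hu' : u ≤ 1) :
    u ≤ truncDistr a x ↔ 0 < x ∧ a ≤ ENNReal.ofReal (1 + x - u) := by
  unfold truncDistr
  split_ifs with hx ha
  · simp only [hu.not_ge, hx.not_gt, false_and]
  · simp only [hu.not_ge, ha, top_le_iff, ENNReal.ofReal_ne_top, and_false]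
  · have hx_pos : 0 < x := not_le.1 hx
    rw [le_max_iff, le_min_iff, ENNReal.le_ofReal_iff_toReal_le ha (by linarith)]
    simp only [hu.not_ge, hu', hx_pos, and_true, or_false, true_and]
    exact le_sub_comm

lemma apply_le_apply {a b : ℝ≥0∞} {x y : ℝ} (hab : a ≤ b) (hxy : x ≤ y) :
    truncDistr b x ≤ truncDistr a y := by
  rcases (nonneg b x).eq_or_lt with h | hpos
  · exact h ▸ nonneg a y
  · obtain ⟨hx, hb⟩ := (le_iff hpos (le_one b x)).1 le_rfl
    refine (le_iff hpos (le_one b x)).2 ⟨hx.trans_le hxy, hab.trans (hb.trans ?_)⟩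
    gcongr

lemma zero_eq_eps0 : truncDistr 0 = eps0 := by
  funext x
  unfold eps0
  split_ifs with hx
  · exact (le_one 0 x).antisymm ((le_iff one_pos le_rfl).2 ⟨hx, zero_le⟩)
  · exact of_nonpos 0 (not_lt.1 hx)

lemma isDistrFn (a : ℝ≥0∞) : IsDistrFn (truncDistr a) :=
  ⟨fun _ _ hxy => apply_le_apply le_rfl hxy, fun _ hx => of_nonpos a hx, le_one a⟩

lemma lukasiewicz_le {a b c : ℝ≥0∞} {x y z : ℝ} (hc : c ≤ a + b) (hz : x + y ≤ z) :
    lukasiewicz (truncDistr a x) (truncDistr b y) ≤ truncDistr c z := by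
  set u := truncDistr a x
  set v := truncDistr b y
  have hu' : u ≤ 1 := le_one a x
  have hv' : v ≤ 1 := le_one b y
  refine max_le ?_ (nonneg c z)
  rcases le_or_gt (u + v - 1) 0 with h | hw
  · exact h.trans (nonneg c z)
  · obtain ⟨hx, ha⟩ := (le_iff (by linarith) hu').1 (le_refl u)
    obtain ⟨hy, hb⟩ := (le_iff (by linarith) hv').1 (le_refl v)
    refine (le_iff hw (by linarith)).2 ⟨by linarith, ?_⟩
    calc c ≤ a + b := hc
      _ ≤ ENNReal.ofReal (1 + x - u) + ENNReal.ofReal (1 + y - v) := add_le_add ha hb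
      _ = ENNReal.ofReal ((1 + x - u) + (1 + y - v)) :=
        (ENNReal.ofReal_add (by linarith) (by linarith)).symm
      _ ≤ ENNReal.ofReal (1 + z - (u + v - 1)) := ENNReal.ofReal_le_ofReal (by linarith)

end truncDistr

theorem stmt8_general {Ω : Type*} (R : Set (Set Ω)) (η : Set Ω → ℝ≥0∞)
    (hη : IsNumSubmeasure R η) (L : ℝ → ℝ → ℝ)
    (hL : ∀ x y : ℝ, 0 < x → 0 < y → x + y ≤ L x y) :
    IsTauSub R L lukasiewicz (fun E => truncDistr (η E)) := by
  obtain ⟨h_empty, h_mono, h_union⟩ := hη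
  refine ⟨fun E _ => truncDistr.isDistrFn (η E), fun x => ?_, fun E F hE hF hEF x => ?_,
    fun E F hE hF x y hx hy => ?_⟩
  · simp only [h_empty, truncDistr.zero_eq_eps0]
  · exact truncDistr.apply_le_apply (h_mono E F hE hF hEF) le_rfl
  · exact truncDistr.lukasiewicz_le (h_union E F hE hF) (hL x y hx hy)

/-- `γ_E(x) = max(min(1 + x - η E, 1), 0)` is a `τ_{L,W}`-submeasure for
every `L ≥ K₁`, `W` the Łukasiewicz t-norm; in particular the `L = +` inequality holds. -/
theorem stmt8 {Ω : Type*} (R : Set (Set Ω)) (hR : IsSetRing R)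
    (η : Set Ω → ℝ≥0∞) (hη : IsNumSubmeasure R η)
    (L : ℝ → ℝ → ℝ) (hL : ∀ x y : ℝ, x + y ≤ L x y) :
    IsTauSub R L (fun u v => max (u + v - 1) 0)
      (fun E x => if x ≤ 0 then 0 else if η E = ∞ then 0
        else max (min (1 + x - (η E).toReal) 1) 0) ∧
    ∀ E F : Set Ω, E ∈ R → F ∈ R → ∀ x y : ℝ, 0 < x → 0 < y →
      max ((if x ≤ 0 then 0 else if η E = ∞ then 0
              else max (min (1 + x - (η E).toReal) 1) 0) +
           (if y ≤ 0 then 0 else if η F = ∞ then 0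
              else max (min (1 + y - (η F).toReal) 1) 0) - 1) 0 ≤
        (if x + y ≤ 0 then 0 else if η (E ∪ F) = ∞ then 0
          else max (min (1 + (x + y) - (η (E ∪ F)).toReal) 1) 0) :=
  ⟨stmt8_general R η hη L fun x y _ _ => hL x y,
    (stmt8_general R η hη (· + ·) fun _ _ _ _ => le_rfl).2.2.2⟩
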